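/- For every n ≥ 1, the unital subalgebra of End_ℂ((ℂ²)^{⊗n}) generated by E_1, …, E_{n−1} is exactly End_{A_t}((ℂ²)^{⊗n}), the commutant of the A_t-action on 1̲^{⊗n}, and this algebra has ℂ-dimension equal to the Catalan number C_n = (1/(n+1))·binom(2n, n). -/

import Mathlib

open scoped TensorProduct
open Complex

noncomputable section

/-- The four generators `X`, `Y`, `K`, `K⁻¹` of the algebra `Aₜ`. -/
inductive QGen : Type
  | X | Y | K | K'
  deriving DecidableEq

/-- The image of a generator in the free algebra on the generators. -/
def qg (x : QGen) : FreeAlgebra ℂ QGen := FreeAlgebra.ι ℂ x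

/-- The defining relations of `Aₜ`:
`KX = t²XK`, `KY = t⁻²YK`, `XY − YX = (K² − K⁻²)/(t² − t⁻²)`, `KK⁻¹ = K⁻¹K = 1`. -/
inductive QRel (t : ℂ) : FreeAlgebra ℂ QGen → FreeAlgebra ℂ QGen → Prop
  | KX : QRel t (qg .K * qg .X) ((t ^ 2 : ℂ) • (qg .X * qg .K))
  | KY : QRel t (qg .K * qg .Y) ((t⁻¹ ^ 2 : ℂ) • (qg .Y * qg .K))
  | XY : QRel t (qg .X * qg .Y - qg .Y * qg .X)
      (((t ^ 2 - t⁻¹ ^ 2)⁻¹ : ℂ) • (qg .K * qg .K - qg .K' * qg .K'))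
  | KK' : QRel t (qg .K * qg .K') 1
  | K'K : QRel t (qg .K' * qg .K) 1

/-- The algebra `Aₜ`: the quotient of the free algebra by the defining relations. -/
abbrev At (t : ℂ) : Type := RingQuot (QRel t)

/-- The generator `X` in `Aₜ`. -/
def aX (t : ℂ) : At t := RingQuot.mkAlgHom ℂ (QRel t) (qg .X)
/-- The generator `Y` in `Aₜ`. -/
def aY (t : ℂ) : At t := RingQuot.mkAlgHom ℂ (QRel t) (qg .Y)
/-- The generator `K` in `Aₜ`. -/
def aK (t : ℂ) : At t := RingQuot.mkAlgHom ℂ (QRel t) (qg .K)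
/-- The generator `K⁻¹` in `Aₜ`. -/
def aK' (t : ℂ) : At t := RingQuot.mkAlgHom ℂ (QRel t) (qg .K')

/-- The quantum integer `[n] = (t^{2n} − t^{−2n})/(t² − t⁻²)`. -/
def qint (t : ℂ) (n : ℤ) : ℂ := (t ^ (2 * n) - t ^ (-(2 * n))) / (t ^ 2 - t⁻¹ ^ 2)

/-- The matrix of `ρ_m(K)`: `K e_j = t^{m−2j} e_j`. -/
def Kmat (t : ℂ) (m : ℕ) : Matrix (Fin (m + 1)) (Fin (m + 1)) ℂ :=
  Matrix.diagonal fun j => t ^ ((m : ℤ) - 2 * (j : ℤ))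

/-- The matrix of `ρ_m(K⁻¹)`: `K⁻¹ e_j = t^{−(m−2j)} e_j`. -/
def K'mat (t : ℂ) (m : ℕ) : Matrix (Fin (m + 1)) (Fin (m + 1)) ℂ :=
  Matrix.diagonal fun j => t ^ (-((m : ℤ) - 2 * (j : ℤ)))

/-- The matrix of `ρ_m(X)`: `X e_j = [j] e_{j−1}` (with `e_{−1} = 0`). -/
def Xmat (t : ℂ) (m : ℕ) : Matrix (Fin (m + 1)) (Fin (m + 1)) ℂ :=
  Matrix.of fun i j => if (j : ℕ) = (i : ℕ) + 1 then qint t (j : ℤ) else 0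

/-- The matrix of `ρ_m(Y)`: `Y e_j = [m−j] e_{j+1}` (with `e_{m+1} = 0`). -/
def Ymat (t : ℂ) (m : ℕ) : Matrix (Fin (m + 1)) (Fin (m + 1)) ℂ :=
  Matrix.of fun i j => if (i : ℕ) = (j : ℕ) + 1 then qint t ((m : ℤ) - (j : ℤ)) else 0

/-- `ρ` is the representation `ρ_m : Aₜ → M_{m+1}(ℂ)` determined by the matrices above. -/
def IsRho (t : ℂ) (m : ℕ) (ρ : At t →ₐ[ℂ] Matrix (Fin (m + 1)) (Fin (m + 1)) ℂ) : Prop :=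
  ρ (aX t) = Xmat t m ∧ ρ (aY t) = Ymat t m ∧ ρ (aK t) = Kmat t m ∧ ρ (aK' t) = K'mat t m

/-- The `n`-fold tensor power `1̲^{⊗n} = (ℂ²)^{⊗n}`, realized concretely as the space of
ℂ-valued functions on the set of multi-indices `(Fin 2)ⁿ` (the basis vector
`e_{s 0} ⊗ ⋯ ⊗ e_{s (n−1)}` corresponds to the delta function at `s`). -/
abbrev Vn (n : ℕ) : Type := (Fin n → Fin 2) → ℂ

/-- Pointwise multiplication by a fixed function, as a linear endomorphism. -/
def ptwiseMul {α : Type} (c : α → ℂ) : (α → ℂ) →ₗ[ℂ] (α → ℂ) where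
  toFun f := fun u => c u * f u
  map_add' f g := by funext u; simp [mul_add]
  map_smul' r f := by funext u; simp [smul_eq_mul]; ring

/-- The coefficients of `μ`: `μ(e_a ⊗ e_b) = muC a b`, i.e. `μ(e_{1/2}⊗e_{−1/2}) = it`,
`μ(e_{−1/2}⊗e_{1/2}) = −it⁻¹`, `0` otherwise (recall `e_{1/2} = e₀`, `e_{−1/2} = e₁`). -/
def muC (t : ℂ) : Fin 2 → Fin 2 → ℂ :=
  ![![0, Complex.I * t], ![-(Complex.I * t⁻¹), 0]]

/-- The coefficients of `η`: `η(1) = ∑_{a,b} etaC a b • e_a ⊗ e_b`, i.e.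
`η(1) = it·e_{1/2}⊗e_{−1/2} − it⁻¹·e_{−1/2}⊗e_{1/2}`. -/
def etaC (t : ℂ) : Fin 2 → Fin 2 → ℂ :=
  ![![0, Complex.I * t], ![-(Complex.I * t⁻¹), 0]]

/-- The Temperley–Lieb generator `E = id^{⊗i} ⊗ (η∘μ) ⊗ id^{⊗(n−i−2)}` acting on
`1̲^{⊗n}`, where `η∘μ` acts on the tensor factors in positions `i` and `i+1`
(`0`-indexed; this is `E_{i+1}` in the `1`-indexed labelling). On basis vectors,
`E (e_{s}) = μ(e_{s i} ⊗ e_{s (i+1)}) · ∑_{a b} etaC a b • e_{s[i:=a][i+1:=b]}`,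
which in function coordinates is the formula below. -/
def TLE (t : ℂ) (n i : ℕ) (h : i + 1 < n) : Module.End ℂ (Vn n) :=
  (ptwiseMul fun u => etaC t (u ⟨i, Nat.lt_of_succ_lt h⟩) (u ⟨i + 1, h⟩)) ∘ₗ
    ∑ a : Fin 2, ∑ b : Fin 2, muC t a b •
      LinearMap.funLeft ℂ ℂ (fun u =>
        Function.update (Function.update u (⟨i, Nat.lt_of_succ_lt h⟩ : Fin n) a)
          (⟨i + 1, h⟩ : Fin n) b)
/-- Diagonal entries of `ρ₁(K) = diag(t, t⁻¹)` on the basis `e₀ = e_{1/2}`, `e₁ = e_{−1/2}`. -/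
def kD (t : ℂ) : Fin 2 → ℂ := ![t, t⁻¹]
/-- Diagonal entries of `ρ₁(K⁻¹) = diag(t⁻¹, t)`. -/
def kD' (t : ℂ) : Fin 2 → ℂ := ![t⁻¹, t]

/-- Action of `K` on `1̲^{⊗n}` (via the iterated coproduct `Δ^{(n−1)}K = K^{⊗n}`). -/
def piK (t : ℂ) (n : ℕ) : Module.End ℂ (Vn n) :=
  ptwiseMul fun u => ∏ k : Fin n, kD t (u k)

/-- Action of `K⁻¹` on `1̲^{⊗n}`. -/
def piK' (t : ℂ) (n : ℕ) : Module.End ℂ (Vn n) :=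
  ptwiseMul fun u => ∏ k : Fin n, kD' t (u k)

/-- Action of `X` on `1̲^{⊗n}` (via `Δ^{(n−1)}X = ∑_i (K⁻¹)^{⊗i} ⊗ X ⊗ K^{⊗(n−1−i)}`;
recall `ρ₁(X)e₁ = e₀`, `ρ₁(X)e₀ = 0`). -/
def piX (t : ℂ) (n : ℕ) : Module.End ℂ (Vn n) :=
  ∑ i : Fin n,
    (ptwiseMul fun u => (if u i = 0 then 1 else 0) *
        (∏ k ∈ Finset.univ.filter (fun k => k < i), kD' t (u k)) *
        (∏ k ∈ Finset.univ.filter (fun k => i < k), kD t (u k))) ∘ₗ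
      LinearMap.funLeft ℂ ℂ (fun u => Function.update u i 1)

/-- Action of `Y` on `1̲^{⊗n}` (via `Δ^{(n−1)}Y = ∑_i (K⁻¹)^{⊗i} ⊗ Y ⊗ K^{⊗(n−1−i)}`;
recall `ρ₁(Y)e₀ = e₁`, `ρ₁(Y)e₁ = 0`). -/
def piY (t : ℂ) (n : ℕ) : Module.End ℂ (Vn n) :=
  ∑ i : Fin n,
    (ptwiseMul fun u => (if u i = 1 then 1 else 0) *
        (∏ k ∈ Finset.univ.filter (fun k => k < i), kD' t (u k)) *
        (∏ k ∈ Finset.univ.filter (fun k => i < k), kD t (u k))) ∘ₗ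
      LinearMap.funLeft ℂ ℂ (fun u => Function.update u i 0)

/-- `π` is the representation of `Aₜ` on the `n`-fold tensor power `1̲^{⊗n}` obtained
from `ρ₁` via the iterated comultiplication. -/
def IsPi (t : ℂ) (n : ℕ) (π : At t →ₐ[ℂ] Module.End ℂ (Vn n)) : Prop :=
  π (aX t) = piX t n ∧ π (aY t) = piY t n ∧ π (aK t) = piK t n ∧ π (aK' t) = piK' t n

/-!
Bending strands with the cup `η` and the cap `μ` turns an endomorphism of `1̲^{⊗n}` commuting with
`Aₜ` into a highest weight vector of weight `1` in `1̲^{⊗2n}`. By the Clebsch–Gordan rule these are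
counted by the lattice paths on `ℕ` with `2n` steps from `0` to `0`, so the commutant has dimension
`C_n`.

Every element `f` of the commutant splits as `f (1 - P) + f P`, where `P` is the Jones–Wenzl
projection. Its range is killed by all the `E_i`, hence lies in the irreducible submodule generated
by `e₀ ⊗ ⋯ ⊗ e₀`, on which `f` is a scalar; so `f P` is a multiple of `P`. On the other hand
`1 - P` lies in the two-sided ideal generated by `E = E_{n-1}`, and bending a strand writes `f a E`
as `(g ⊗ id) E` with `g` in the commutant on `n - 1` factors, which reduces `f (1 - P)` to the
induction hypothesis.
-/

namespace TemperleyLieb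

/-! ### Quantum integers -/

section QuantumIntegers

variable {t : ℂ}

theorem zpow_injective (ht : t ≠ 0) (hroot : ∀ k : ℕ, 0 < k → t ^ k ≠ 1) :
    Function.Injective fun k : ℤ ↦ t ^ k := by
  have hu : ¬ IsOfFinOrder (Units.mk0 t ht) := by
    rw [isOfFinOrder_iff_pow_eq_one]
    rintro ⟨k, hk, hpow⟩
    exact hroot k hk (by simpa [Units.ext_iff] using hpow)
  intro a b hab
  exact injective_zpow_iff_not_isOfFinOrder.2 hu (Units.ext (by simpa using hab))

theorem ne_zero_of_zpow_injective (hinj : Function.Injective fun k : ℤ ↦ t ^ k) : t ≠ 0 := by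
  rintro rfl
  exact absurd (hinj (show (0 : ℂ) ^ (1 : ℤ) = 0 ^ (2 : ℤ) by simp)) (by norm_num)

theorem zpow_sub_zpow_neg_ne_zero (hinj : Function.Injective fun k : ℤ ↦ t ^ k) {n : ℤ}
    (hn : n ≠ 0) : t ^ (2 * n) - t ^ (-(2 * n)) ≠ 0 :=
  sub_ne_zero.2 fun h ↦ hn (by have := hinj h; lia)

theorem qint_denom_ne_zero (hinj : Function.Injective fun k : ℤ ↦ t ^ k) :
    t ^ 2 - t⁻¹ ^ 2 ≠ 0 := by
  simpa [zpow_neg] using mod_cast zpow_sub_zpow_neg_ne_zero hinj one_ne_zero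

theorem qint_ne_zero (hinj : Function.Injective fun k : ℤ ↦ t ^ k) {n : ℤ} (hn : n ≠ 0) :
    qint t n ≠ 0 :=
  div_ne_zero (zpow_sub_zpow_neg_ne_zero hinj hn) (qint_denom_ne_zero hinj)

@[simp]
theorem qint_zero (t : ℂ) : qint t 0 = 0 := by simp [qint]

theorem qint_one (hinj : Function.Injective fun k : ℤ ↦ t ^ k) : qint t 1 = 1 := by
  have hd := qint_denom_ne_zero hinj
  rw [qint, mul_one, zpow_neg, ← inv_zpow]
  exact div_self (mod_cast hd)

theorem qint_mul_qint_add_qint (hinj : Function.Injective fun k : ℤ ↦ t ^ k) (k l : ℤ) :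
    qint t k * qint t (l - k + 1) + qint t (l - 2 * k) = qint t (k + 1) * qint t (l - k) := by
  have ht := ne_zero_of_zpow_injective hinj
  have hd : (t ^ 2) ^ 2 - 1 ≠ 0 := fun h ↦
    qint_denom_ne_zero hinj (by field_simp; linear_combination h)
  have hk : (t ^ 2) ^ k ≠ 0 := zpow_ne_zero _ (pow_ne_zero _ ht)
  have hl : (t ^ 2) ^ l ≠ 0 := zpow_ne_zero _ (pow_ne_zero _ ht)
  have hq (n : ℤ) : qint t n = ((t ^ 2) ^ n - ((t ^ 2) ^ n)⁻¹) / (t ^ 2 - (t ^ 2)⁻¹) := by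
    rw [qint, zpow_neg, zpow_mul, inv_pow]; norm_cast
  have hq2 : t ^ 2 ≠ 0 := pow_ne_zero _ ht
  simp only [hq, two_mul, zpow_add₀ hq2, zpow_sub₀ hq2, zpow_one]
  generalize t ^ 2 = q at *
  field_simp
  ring

theorem qint_add_two (hinj : Function.Injective fun k : ℤ ↦ t ^ k) (n : ℤ) :
    qint t (n + 2) = (t ^ 2 + t⁻¹ ^ 2) * qint t (n + 1) - qint t n := by
  have hd := qint_denom_ne_zero hinj
  have htwo : qint t 2 = t ^ 2 + t⁻¹ ^ 2 := by
    rw [qint, zpow_neg, ← inv_zpow]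
    refine (div_eq_iff hd).2 ?_
    norm_cast
    ring
  have h := qint_mul_qint_add_qint hinj 1 (n + 2)
  rw [qint_one hinj, one_add_one_eq_two, htwo] at h
  ring_nf at h ⊢
  linear_combination h

end QuantumIntegers

/-! ### Highest weight vectors -/

section HighestWeight

variable {V : Type*} [AddCommGroup V] [Module ℂ V] {t : ℂ} {X Y K K' : Module.End ℂ V}

/-- Endomorphisms satisfying the defining relations of `Aₜ`, that is, an `Aₜ`-module structure
on `V`. This is the `q`-analogue of `IsSl2Triple`. -/
structure IsQuantumSl2Triple (t : ℂ) (X Y K K' : Module.End ℂ V) : Prop where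
  mul_inv : K * K' = 1
  inv_mul : K' * K = 1
  mul_X : K * X = t ^ 2 • (X * K)
  mul_Y : K * Y = t⁻¹ ^ 2 • (Y * K)
  commutator : X * Y - Y * X = (t ^ 2 - t⁻¹ ^ 2)⁻¹ • (K * K - K' * K')

/-- The space of vectors of weight `t ^ l` annihilated by `X`. -/
def highestWeightSpace (t : ℂ) (X K : Module.End ℂ V) (l : ℤ) : Submodule ℂ V :=
  LinearMap.ker X ⊓ K.eigenspace (t ^ l)

theorem mem_highestWeightSpace {l : ℤ} {v : V} :
    v ∈ highestWeightSpace t X K l ↔ X v = 0 ∧ K v = t ^ l • v := by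
  simp [highestWeightSpace]

namespace IsQuantumSl2Triple

variable {l : ℤ} {v : V}

theorem inv_mul_comm (h : IsQuantumSl2Triple t X Y K K') {Z : Module.End ℂ V} {c : ℂ}
    (hc : c ≠ 0) (hZ : K * Z = c • (Z * K)) : K' * Z = c⁻¹ • (Z * K') := by
  calc K' * Z = c⁻¹ • (K' * (c • (Z * K)) * K') := by
        rw [mul_smul_comm, smul_mul_assoc, inv_smul_smul₀ hc, mul_assoc, mul_assoc, h.mul_inv,
          mul_one]
    _ = c⁻¹ • (Z * K') := by rw [← hZ, ← mul_assoc, h.inv_mul, one_mul]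

theorem K_apply_Y (h : IsQuantumSl2Triple t X Y K K') (ht : t ≠ 0) (hv : K v = t ^ l • v) :
    K (Y v) = t ^ (l - 2) • Y v := by
  have := LinearMap.congr_fun h.mul_Y v
  simp only [Module.End.mul_apply, LinearMap.smul_apply, hv, map_smul, smul_smul] at this
  rw [this, zpow_sub₀ ht, inv_pow, mul_comm, div_eq_mul_inv]
  norm_cast

theorem K_apply_Y_pow (h : IsQuantumSl2Triple t X Y K K') (ht : t ≠ 0) (hv : K v = t ^ l • v)
    (k : ℕ) : K ((Y ^ k) v) = t ^ (l - 2 * k) • (Y ^ k) v := by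
  induction k with
  | zero => simpa using hv
  | succ k ih =>
    rw [pow_succ', Module.End.mul_apply, h.K_apply_Y ht ih]
    congr 2
    push_cast
    ring

theorem inv_apply (h : IsQuantumSl2Triple t X Y K K') (ht : t ≠ 0) (hv : K v = t ^ l • v) :
    K' v = t ^ (-l) • v := by
  have hK : K' (K v) = v := LinearMap.congr_fun h.inv_mul v
  rw [hv, map_smul] at hK
  rw [zpow_neg, ← hK, smul_smul, inv_mul_cancel₀ (zpow_ne_zero l ht), one_smul, hK]

theorem X_apply_Y (h : IsQuantumSl2Triple t X Y K K') (ht : t ≠ 0) (hv : K v = t ^ l • v) :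
    X (Y v) = Y (X v) + qint t l • v := by
  have := LinearMap.congr_fun h.commutator v
  simp only [LinearMap.sub_apply, Module.End.mul_apply, LinearMap.smul_apply, hv, map_smul,
    h.inv_apply ht hv, smul_smul, ← zpow_add₀ ht, ← sub_smul] at this
  rw [← sub_eq_iff_eq_add', this, qint, div_eq_inv_mul, two_mul, neg_add]

theorem X_apply_Y_pow (h : IsQuantumSl2Triple t X Y K K')
    (hinj : Function.Injective fun k : ℤ ↦ t ^ k) (hv : v ∈ highestWeightSpace t X K l) (k : ℕ) :
    X ((Y ^ (k + 1)) v) = (qint t (k + 1) * qint t (l - k)) • (Y ^ k) v := by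
  have ht := ne_zero_of_zpow_injective hinj
  obtain ⟨hX, hK⟩ := mem_highestWeightSpace.1 hv
  induction k with
  | zero => simp [h.X_apply_Y ht hK, hX, qint_one hinj]
  | succ k ih =>
    rw [pow_succ', Module.End.mul_apply, h.X_apply_Y ht (h.K_apply_Y_pow ht hK _), ih, map_smul,
      ← Module.End.mul_apply, ← pow_succ', ← add_smul]
    have := qint_mul_qint_add_qint hinj (k + 1) l
    rw [show l - (k + 1) + 1 = l - k by ring] at this
    push_cast
    rw [this]

theorem Y_pow_apply_ne_zero (h : IsQuantumSl2Triple t X Y K K')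
    (hinj : Function.Injective fun k : ℤ ↦ t ^ k) (hv : v ∈ highestWeightSpace t X K l)
    (hv0 : v ≠ 0) {k : ℕ} (hk : ∀ j < k, l ≠ j) : (Y ^ k) v ≠ 0 := by
  induction k with
  | zero => simpa using hv0
  | succ k ih =>
    intro hY
    have hX := h.X_apply_Y_pow hinj hv k
    rw [hY, map_zero, eq_comm, smul_eq_zero] at hX
    refine hX.elim ?_ (ih fun j hj ↦ hk j (hj.trans k.lt_succ_self))
    exact mul_ne_zero (qint_ne_zero hinj k.cast_add_one_ne_zero)
      (qint_ne_zero hinj (sub_ne_zero.2 (hk k k.lt_succ_self)))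

theorem linearIndependent_Y_pow {ι : Type*} (h : IsQuantumSl2Triple t X Y K K')
    (hinj : Function.Injective fun k : ℤ ↦ t ^ k) (hv : K v = t ^ l • v) {e : ι → ℕ}
    (he : Function.Injective e) (hne : ∀ i, (Y ^ e i) v ≠ 0) :
    LinearIndependent ℂ fun i ↦ (Y ^ e i) v := by
  refine Module.End.eigenvectors_linearIndependent' K (fun i ↦ t ^ (l - 2 * (e i : ℤ)))
    (fun i j hij ↦ he ?_) _ fun i ↦ Module.End.hasEigenvector_iff.2 ⟨?_, hne i⟩
  · have := hinj hij
    lia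
  · exact Module.End.mem_eigenspace_iff.2
      (h.K_apply_Y_pow (ne_zero_of_zpow_injective hinj) hv (e i))

theorem highestWeightSpace_eq_bot [FiniteDimensional ℂ V] (h : IsQuantumSl2Triple t X Y K K')
    (hinj : Function.Injective fun k : ℤ ↦ t ^ k) (hl : l < 0) :
    highestWeightSpace t X K l = ⊥ := by
  refine (Submodule.eq_bot_iff _).2 fun v hv ↦ by_contra fun hv0 ↦ ?_
  have hY (k : ℕ) : (Y ^ k) v ≠ 0 := h.Y_pow_apply_ne_zero hinj hv hv0 fun j _ ↦ by lia
  have hli := h.linearIndependent_Y_pow hinj (mem_highestWeightSpace.1 hv).2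
    Function.injective_id hY
  exact hli.finite.false

theorem Y_apply_eq_zero [FiniteDimensional ℂ V] (h : IsQuantumSl2Triple t X Y K K')
    (hinj : Function.Injective fun k : ℤ ↦ t ^ k) (hv : v ∈ highestWeightSpace t X K 0) :
    Y v = 0 := by
  have ht := ne_zero_of_zpow_injective hinj
  obtain ⟨hX, hK⟩ := mem_highestWeightSpace.1 hv
  have hYv : Y v ∈ highestWeightSpace t X K (0 - 2) :=
    mem_highestWeightSpace.2 ⟨by simp [h.X_apply_Y ht hK, hX], h.K_apply_Y ht hK⟩
  rwa [h.highestWeightSpace_eq_bot hinj (by norm_num), Submodule.mem_bot] at hYv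

end IsQuantumSl2Triple

end HighestWeight

/-! ### Slices along the last tensor factor -/

section Slices

variable {n : ℕ}

/-- The component of a tensor along the vector `e_a` of the last factor, so that
`F = slice 0 F ⊗ e₀ + slice 1 F ⊗ e₁`. -/
def slice (a : Fin 2) : Vn (n + 1) →ₗ[ℂ] Vn n :=
  LinearMap.funLeft ℂ ℂ fun u ↦ (Fin.snoc u a : Fin (n + 1) → Fin 2)

/-- The tensor `G 0 ⊗ e₀ + G 1 ⊗ e₁`. -/
def glue : (Fin 2 → Vn n) →ₗ[ℂ] Vn (n + 1) where
  toFun G u := G (u (Fin.last n)) (Fin.init u)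
  map_add' _ _ := rfl
  map_smul' _ _ := rfl

theorem slice_apply (a : Fin 2) (F : Vn (n + 1)) (u : Fin n → Fin 2) :
    slice a F u = F (Fin.snoc u a) := rfl

@[simp]
theorem slice_glue (a : Fin 2) (G : Fin 2 → Vn n) : slice a (glue G) = G a := by
  ext u
  simp [slice_apply, glue]

theorem ext_slice {F G : Vn (n + 1)} (h : ∀ a, slice a F = slice a G) : F = G := by
  ext u
  rw [← Fin.snoc_init_self u]
  exact congr_fun (h (u (Fin.last n))) (Fin.init u)

theorem ext_slice_two {F G : Vn (n + 1)} (h₀ : slice 0 F = slice 0 G)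
    (h₁ : slice 1 F = slice 1 G) : F = G :=
  ext_slice (Fin.forall_fin_two.2 ⟨h₀, h₁⟩)

theorem ptwiseMul_apply {α : Type} (c f : α → ℂ) (u : α) : ptwiseMul c f u = c u * f u := rfl

end Slices

/-! ### The action of the quantum group -/

section Action

variable {t : ℂ} {n : ℕ}

/-- The action on `1̲^{⊗n}` of an element `e` with coproduct `e ⊗ K + K⁻¹ ⊗ e` that acts on `ℂ²`
as the matrix unit sending `e_q` to `e_p`. -/
def skewPrimitive (t : ℂ) (n : ℕ) (p q : Fin 2) : Module.End ℂ (Vn n) :=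
  ∑ i : Fin n,
    (ptwiseMul fun u ↦ (if u i = p then 1 else 0) *
        (∏ k ∈ Finset.univ.filter (fun k ↦ k < i), kD' t (u k)) *
        (∏ k ∈ Finset.univ.filter (fun k ↦ i < k), kD t (u k))) ∘ₗ
      LinearMap.funLeft ℂ ℂ (fun u ↦ Function.update u i q)

theorem slice_skewPrimitive (p q a : Fin 2) (F : Vn (n + 1)) :
    slice a (skewPrimitive t (n + 1) p q F) = kD t a • skewPrimitive t n p q (slice a F) +
      (if a = p then 1 else 0 : ℂ) • piK' t n (slice q F) := by
  ext u
  simp only [slice_apply, skewPrimitive, ptwiseMul_apply, Fin.sum_univ_castSucc,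
    LinearMap.add_apply, LinearMap.sum_apply, LinearMap.comp_apply, Pi.add_apply,
    Finset.sum_apply, Pi.smul_apply, LinearMap.funLeft_apply, Finset.prod_filter,
    Fin.prod_univ_castSucc, Fin.snoc_castSucc, Fin.snoc_last, piK', smul_eq_mul,
    Fin.castSucc_lt_castSucc_iff, Fin.castSucc_lt_last, if_true, ← Fin.snoc_update,
    Fin.update_snoc_last, lt_irrefl, if_false, (Fin.castSucc_lt_last _).not_gt, Finset.mul_sum,
    Finset.prod_const_one, mul_one]
  congr 1
  · exact Finset.sum_congr rfl fun i _ ↦ by ring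
  · ring

@[simp]
theorem slice_zero_piX (F : Vn (n + 1)) :
    slice 0 (piX t (n + 1) F) = t • piX t n (slice 0 F) + piK' t n (slice 1 F) := by
  simpa using! slice_skewPrimitive 0 1 0 F

@[simp]
theorem slice_one_piX (F : Vn (n + 1)) :
    slice 1 (piX t (n + 1) F) = t⁻¹ • piX t n (slice 1 F) := by
  simpa using! slice_skewPrimitive 0 1 1 F

@[simp]
theorem slice_zero_piY (F : Vn (n + 1)) :
    slice 0 (piY t (n + 1) F) = t • piY t n (slice 0 F) := by
  simpa using! slice_skewPrimitive 1 0 0 F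

@[simp]
theorem slice_one_piY (F : Vn (n + 1)) :
    slice 1 (piY t (n + 1) F) = t⁻¹ • piY t n (slice 1 F) + piK' t n (slice 0 F) := by
  simpa using! slice_skewPrimitive 1 0 1 F

theorem slice_piK (a : Fin 2) (F : Vn (n + 1)) :
    slice a (piK t (n + 1) F) = kD t a • piK t n (slice a F) := by
  ext u
  simp only [slice_apply, piK, ptwiseMul_apply, Fin.prod_univ_castSucc, Fin.snoc_castSucc,
    Fin.snoc_last, Pi.smul_apply, smul_eq_mul]
  ring

theorem slice_piK' (a : Fin 2) (F : Vn (n + 1)) :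
    slice a (piK' t (n + 1) F) = kD' t a • piK' t n (slice a F) := by
  ext u
  simp only [slice_apply, piK', ptwiseMul_apply, Fin.prod_univ_castSucc, Fin.snoc_castSucc,
    Fin.snoc_last, Pi.smul_apply, smul_eq_mul]
  ring

@[simp]
theorem slice_zero_piK (F : Vn (n + 1)) : slice 0 (piK t (n + 1) F) = t • piK t n (slice 0 F) :=
  slice_piK 0 F

@[simp]
theorem slice_one_piK (F : Vn (n + 1)) :
    slice 1 (piK t (n + 1) F) = t⁻¹ • piK t n (slice 1 F) :=
  slice_piK 1 F

@[simp]
theorem slice_zero_piK' (F : Vn (n + 1)) :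
    slice 0 (piK' t (n + 1) F) = t⁻¹ • piK' t n (slice 0 F) :=
  slice_piK' 0 F

@[simp]
theorem slice_one_piK' (F : Vn (n + 1)) :
    slice 1 (piK' t (n + 1) F) = t • piK' t n (slice 1 F) :=
  slice_piK' 1 F

@[simp]
theorem piX_zero (t : ℂ) : piX t 0 = 0 := rfl

@[simp]
theorem piY_zero (t : ℂ) : piY t 0 = 0 := rfl

@[simp]
theorem piK_zero (t : ℂ) : piK t 0 = 1 := by
  ext
  simp [piK, ptwiseMul_apply]

@[simp]
theorem piK'_zero (t : ℂ) : piK' t 0 = 1 := by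
  ext
  simp [piK', ptwiseMul_apply]

theorem isQuantumSl2Triple_pi (hinj : Function.Injective fun k : ℤ ↦ t ^ k) (n : ℕ) :
    IsQuantumSl2Triple t (piX t n) (piY t n) (piK t n) (piK' t n) := by
  have ht := ne_zero_of_zpow_injective hinj
  have hd : t ^ 4 - 1 ≠ 0 := fun h ↦
    qint_denom_ne_zero hinj (by field_simp; linear_combination h)
  induction n with
  | zero => constructor <;> simp
  | succ n ih =>
    have KK' := LinearMap.congr_fun ih.mul_inv
    have K'K := LinearMap.congr_fun ih.inv_mul
    have KX := LinearMap.congr_fun ih.mul_X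
    have KY := LinearMap.congr_fun ih.mul_Y
    have K'X := LinearMap.congr_fun (ih.inv_mul_comm (pow_ne_zero 2 ht) ih.mul_X)
    have K'Y := LinearMap.congr_fun (ih.inv_mul_comm (pow_ne_zero 2 (inv_ne_zero ht)) ih.mul_Y)
    have XY (F) := sub_eq_iff_eq_add.1 (LinearMap.congr_fun ih.commutator F)
    simp only [Module.End.mul_apply, LinearMap.smul_apply, LinearMap.sub_apply,
      Module.End.one_apply] at KK' K'K KX KY K'X K'Y XY
    constructor <;> refine LinearMap.ext fun F ↦ ext_slice_two ?_ ?_ <;>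
      simp only [Module.End.mul_apply, Module.End.one_apply, LinearMap.smul_apply,
        LinearMap.sub_apply, map_add, map_sub, map_smul, slice_zero_piX, slice_one_piX,
        slice_zero_piY, slice_one_piY, slice_zero_piK, slice_one_piK, slice_zero_piK',
        slice_one_piK', KK', K'K, KX, KY, K'X, K'Y, XY] <;>
      match_scalars <;> field_simp <;> ring

end Action

/-! ### Cups, caps and the Temperley–Lieb relations -/

section Diagrams

variable {t : ℂ} {m k l : ℕ}

/-- The map `f ⊗ id` on `1̲^{⊗(m+1)}`. -/
def tensorId (f : Vn m →ₗ[ℂ] Vn k) : Vn (m + 1) →ₗ[ℂ] Vn (k + 1) :=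
  glue ∘ₗ LinearMap.pi fun a ↦ f ∘ₗ slice a

@[simp]
theorem slice_tensorId (f : Vn m →ₗ[ℂ] Vn k) (a : Fin 2) (F : Vn (m + 1)) :
    slice a (tensorId f F) = f (slice a F) := by
  simp [tensorId]

theorem tensorId_comp (g : Vn k →ₗ[ℂ] Vn l) (f : Vn m →ₗ[ℂ] Vn k) :
    tensorId (g ∘ₗ f) = tensorId g ∘ₗ tensorId f :=
  LinearMap.ext fun F ↦ ext_slice fun a ↦ by simp

theorem tensorId_add (f g : Vn m →ₗ[ℂ] Vn k) : tensorId (f + g) = tensorId f + tensorId g :=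
  LinearMap.ext fun F ↦ ext_slice fun a ↦ by simp

theorem tensorId_smul (c : ℂ) (f : Vn m →ₗ[ℂ] Vn k) : tensorId (c • f) = c • tensorId f :=
  LinearMap.ext fun F ↦ ext_slice fun a ↦ by simp

theorem tensorId_one : tensorId (1 : Module.End ℂ (Vn m)) = 1 :=
  LinearMap.ext fun F ↦ ext_slice fun a ↦ by simp

/-- The algebra homomorphism `f ↦ f ⊗ id`. -/
def tensorIdAlgHom : Module.End ℂ (Vn m) →ₐ[ℂ] Module.End ℂ (Vn (m + 1)) :=
  AlgHom.ofLinearMap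
    { toFun := tensorId, map_add' := tensorId_add, map_smul' := tensorId_smul }
    tensorId_one tensorId_comp

theorem tensorIdAlgHom_apply (f : Module.End ℂ (Vn m)) : tensorIdAlgHom f = tensorId f := rfl

/-- The map `id ⊗ η` from `1̲^{⊗m}` to `1̲^{⊗(m+2)}`. -/
def cup (t : ℂ) (m : ℕ) : Vn m →ₗ[ℂ] Vn (m + 2) :=
  glue ∘ₗ LinearMap.pi fun b ↦ glue ∘ₗ LinearMap.pi fun a ↦ etaC t a b • LinearMap.id

/-- The map `id ⊗ μ` from `1̲^{⊗(m+2)}` to `1̲^{⊗m}`. -/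
def cap (t : ℂ) (m : ℕ) : Vn (m + 2) →ₗ[ℂ] Vn m :=
  ∑ a, ∑ b, muC t a b • slice a ∘ₗ slice b

@[simp]
theorem slice_slice_cup (a b : Fin 2) (F : Vn m) :
    slice a (slice b (cup t m F)) = etaC t a b • F := by
  simp [cup]

theorem cap_apply (F : Vn (m + 2)) :
    cap t m F = (I * t) • slice 0 (slice 1 F) - (I * t⁻¹) • slice 1 (slice 0 F) := by
  simp [cap, muC, Fin.sum_univ_two, sub_eq_add_neg]

theorem cap_comp_tensorId (f : Vn m →ₗ[ℂ] Vn k) :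
    cap t k ∘ₗ tensorId (tensorId f) = f ∘ₗ cap t m :=
  LinearMap.ext fun F ↦ by simp [cap]

theorem tensorId_comp_cup (f : Vn m →ₗ[ℂ] Vn k) :
    tensorId (tensorId f) ∘ₗ cup t m = cup t k ∘ₗ f :=
  LinearMap.ext fun F ↦ ext_slice fun b ↦ ext_slice fun a ↦ by simp

theorem I_mul_mul_I_mul_inv (ht : t ≠ 0) : I * t * (I * t⁻¹) = -1 := by
  rw [mul_mul_mul_comm, I_mul_I, mul_inv_cancel₀ ht, mul_one]

theorem cap_comp_tensorId_cup (ht : t ≠ 0) :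
    cap t (m + 1) ∘ₗ tensorId (cup t m) = LinearMap.id := by
  refine LinearMap.ext fun F ↦ ext_slice_two ?_ ?_ <;>
    simp [cap_apply, etaC, smul_smul, mul_comm (I * t⁻¹), I_mul_mul_I_mul_inv ht]

theorem tensorId_cap_comp_cup (ht : t ≠ 0) :
    tensorId (cap t m) ∘ₗ cup t (m + 1) = LinearMap.id := by
  refine LinearMap.ext fun F ↦ ext_slice_two ?_ ?_ <;>
    simp [cap_apply, etaC, smul_smul, mul_comm (I * t⁻¹), I_mul_mul_I_mul_inv ht]

theorem cap_comp_cup : cap t m ∘ₗ cup t m = -(t ^ 2 + t⁻¹ ^ 2) • LinearMap.id := by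
  have h₀ : I * t * (I * t) = -t ^ 2 := by linear_combination t ^ 2 * I_mul_I
  have h₁ : I * t⁻¹ * (I * t⁻¹) = -t⁻¹ ^ 2 := by linear_combination t⁻¹ ^ 2 * I_mul_I
  refine LinearMap.ext fun F ↦ ?_
  simp only [LinearMap.comp_apply, cap_apply, slice_slice_cup, smul_smul]
  simp [etaC, h₀, h₁, neg_add_eq_sub, sub_smul]

/-- The Temperley–Lieb generator `id ⊗ (η ∘ μ)` acting on the last two factors of
`1̲^{⊗(m+2)}`. -/
def lastE (t : ℂ) (m : ℕ) : Module.End ℂ (Vn (m + 2)) :=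
  cup t m ∘ₗ cap t m

theorem TLE_last (h : m + 1 < m + 2) : TLE t (m + 2) m h = lastE t m := by
  have h1 : (⟨m + 1, h⟩ : Fin (m + 2)) = Fin.last (m + 1) := rfl
  have h2 : (⟨m, Nat.lt_of_succ_lt h⟩ : Fin (m + 2)) = Fin.castSucc (Fin.last m) := rfl
  refine LinearMap.ext fun F ↦ ext_slice fun b ↦ ext_slice fun a ↦ funext fun u ↦ ?_
  simp only [lastE, LinearMap.comp_apply, slice_slice_cup, Pi.smul_apply, smul_eq_mul]
  simp only [slice_apply, TLE, h1, h2, LinearMap.comp_apply, ptwiseMul_apply, Fin.snoc_last,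
    Fin.snoc_castSucc]
  congr 1
  simp [cap, slice_apply, ← Fin.snoc_update, Fin.update_snoc_last, LinearMap.funLeft_apply]

theorem TLE_succ {i : ℕ} (h : i + 1 < m) (h' : i + 1 < m + 1) :
    TLE t (m + 1) i h' = tensorId (TLE t m i h) := by
  have h1 : (⟨i + 1, h'⟩ : Fin (m + 1)) = Fin.castSucc ⟨i + 1, h⟩ := rfl
  have h2 : (⟨i, Nat.lt_of_succ_lt h'⟩ : Fin (m + 1)) =
    Fin.castSucc ⟨i, Nat.lt_of_succ_lt h⟩ := rfl
  refine LinearMap.ext fun F ↦ ext_slice fun a ↦ funext fun u ↦ ?_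
  rw [slice_tensorId]
  simp only [slice_apply, TLE, h1, h2, LinearMap.comp_apply, ptwiseMul_apply, Fin.snoc_castSucc]
  simp [slice_apply, ← Fin.snoc_update, LinearMap.funLeft_apply, -Fin.castSucc_mk]

theorem commute_tensorId_lastE (f : Module.End ℂ (Vn m)) :
    Commute (tensorIdAlgHom (tensorIdAlgHom f)) (lastE t m) := by
  calc tensorId (tensorId f) ∘ₗ cup t m ∘ₗ cap t m = cup t m ∘ₗ f ∘ₗ cap t m := by
        rw [← LinearMap.comp_assoc, tensorId_comp_cup, LinearMap.comp_assoc]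
    _ = (cup t m ∘ₗ cap t m) ∘ₗ tensorId (tensorId f) := by
        rw [LinearMap.comp_assoc, cap_comp_tensorId]

theorem lastE_mul_lastE : lastE t m * lastE t m = -(t ^ 2 + t⁻¹ ^ 2) • lastE t m := by
  calc cup t m ∘ₗ (cap t m ∘ₗ cup t m) ∘ₗ cap t m = -(t ^ 2 + t⁻¹ ^ 2) • lastE t m := by
        rw [cap_comp_cup, LinearMap.smul_comp, LinearMap.id_comp, LinearMap.comp_smul]; rfl

theorem lastE_mul_tensorId_lastE_mul_lastE (ht : t ≠ 0) :
    lastE t (m + 1) * tensorIdAlgHom (lastE t m) * lastE t (m + 1) = lastE t (m + 1) := by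
  calc cup t (m + 1) ∘ₗ cap t (m + 1) ∘ₗ tensorId (cup t m ∘ₗ cap t m) ∘ₗ
        cup t (m + 1) ∘ₗ cap t (m + 1)
      = cup t (m + 1) ∘ₗ (cap t (m + 1) ∘ₗ tensorId (cup t m)) ∘ₗ
        (tensorId (cap t m) ∘ₗ cup t (m + 1)) ∘ₗ cap t (m + 1) := by
        rw [tensorId_comp]; rfl
    _ = lastE t (m + 1) := by
        rw [cap_comp_tensorId_cup ht, tensorId_cap_comp_cup ht]; rfl

theorem tensorId_lastE_mul_lastE_mul_tensorId_lastE (ht : t ≠ 0) :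
    tensorIdAlgHom (lastE t m) * lastE t (m + 1) * tensorIdAlgHom (lastE t m) =
      tensorIdAlgHom (lastE t m) := by
  calc tensorId (cup t m ∘ₗ cap t m) ∘ₗ (cup t (m + 1) ∘ₗ cap t (m + 1)) ∘ₗ
        tensorId (cup t m ∘ₗ cap t m)
      = tensorId (cup t m) ∘ₗ (tensorId (cap t m) ∘ₗ cup t (m + 1)) ∘ₗ
        (cap t (m + 1) ∘ₗ tensorId (cup t m)) ∘ₗ tensorId (cap t m) := by
        rw [tensorId_comp]; rfl
    _ = tensorId (cup t m ∘ₗ cap t m) := by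
        rw [cap_comp_tensorId_cup ht, tensorId_cap_comp_cup ht, tensorId_comp]; rfl

end Diagrams

/-! ### Intertwiners -/

section Intertwiners

variable {t : ℂ} {m k l : ℕ}

/-- The generators of `Aₜ` acting on `1̲^{⊗n}`. -/
def act (t : ℂ) (n : ℕ) : QGen → Module.End ℂ (Vn n)
  | .X => piX t n
  | .Y => piY t n
  | .K => piK t n
  | .K' => piK' t n

/-- The space `Hom_{Aₜ}(1̲^{⊗m}, 1̲^{⊗k})`. -/
def intertwiners (t : ℂ) (m k : ℕ) : Submodule ℂ (Vn m →ₗ[ℂ] Vn k) where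
  carrier := {f | ∀ g, act t k g ∘ₗ f = f ∘ₗ act t m g}
  add_mem' hf₁ hf₂ g := by rw [LinearMap.comp_add, hf₁ g, hf₂ g, LinearMap.add_comp]
  zero_mem' g := by rw [LinearMap.comp_zero, LinearMap.zero_comp]
  smul_mem' c f hf g := by rw [LinearMap.comp_smul, hf g, LinearMap.smul_comp]

theorem mem_intertwiners {f : Vn m →ₗ[ℂ] Vn k} :
    f ∈ intertwiners t m k ↔ (∀ F, piX t k (f F) = f (piX t m F)) ∧
      (∀ F, piY t k (f F) = f (piY t m F)) ∧ (∀ F, piK t k (f F) = f (piK t m F)) ∧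
      ∀ F, piK' t k (f F) = f (piK' t m F) := by
  constructor
  · intro h
    exact ⟨LinearMap.congr_fun (h .X), LinearMap.congr_fun (h .Y), LinearMap.congr_fun (h .K),
      LinearMap.congr_fun (h .K')⟩
  · rintro ⟨hX, hY, hK, hK'⟩ (_ | _ | _ | _)
    exacts [LinearMap.ext hX, LinearMap.ext hY, LinearMap.ext hK, LinearMap.ext hK']

theorem comp_mem_intertwiners {g : Vn k →ₗ[ℂ] Vn l} {f : Vn m →ₗ[ℂ] Vn k}
    (hg : g ∈ intertwiners t k l) (hf : f ∈ intertwiners t m k) :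
    g ∘ₗ f ∈ intertwiners t m l := fun x ↦ by
  rw [← LinearMap.comp_assoc, hg x, LinearMap.comp_assoc, hf x, LinearMap.comp_assoc]

theorem tensorId_mem_intertwiners {f : Vn m →ₗ[ℂ] Vn k} (hf : f ∈ intertwiners t m k) :
    tensorId f ∈ intertwiners t (m + 1) (k + 1) := by
  obtain ⟨hX, hY, hK, hK'⟩ := mem_intertwiners.1 hf
  refine mem_intertwiners.2 ⟨fun F ↦ ?_, fun F ↦ ?_, fun F ↦ ?_, fun F ↦ ?_⟩ <;>
    apply ext_slice_two <;> simp [hX, hY, hK, hK']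

theorem cup_mem_intertwiners (ht : t ≠ 0) : cup t m ∈ intertwiners t m (m + 2) := by
  refine mem_intertwiners.2 ⟨fun F ↦ ?_, fun F ↦ ?_, fun F ↦ ?_, fun F ↦ ?_⟩ <;>
    refine ext_slice_two (ext_slice_two ?_ ?_) (ext_slice_two ?_ ?_) <;>
    simp [etaC, smul_smul, ht, mul_comm _ I, mul_left_comm _ I]

theorem cap_mem_intertwiners (ht : t ≠ 0) : cap t m ∈ intertwiners t (m + 2) m := by
  refine mem_intertwiners.2 ⟨fun F ↦ ?_, fun F ↦ ?_, fun F ↦ ?_, fun F ↦ ?_⟩ <;>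
    simp [cap_apply, smul_smul, ht]

/-- Bending the last output strand of an intertwiner into an input strand. -/
def rotate (ht : t ≠ 0) (m k : ℕ) : intertwiners t m (k + 1) ≃ₗ[ℂ] intertwiners t (m + 1) k where
  toFun f := ⟨cap t k ∘ₗ tensorId f.1,
    comp_mem_intertwiners (cap_mem_intertwiners ht) (tensorId_mem_intertwiners f.2)⟩
  invFun g := ⟨tensorId g.1 ∘ₗ cup t m,
    comp_mem_intertwiners (tensorId_mem_intertwiners g.2) (cup_mem_intertwiners ht)⟩
  map_add' f g := Subtype.ext <| by simp [tensorId_add, LinearMap.comp_add]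
  map_smul' c f := Subtype.ext <| by simp [tensorId_smul, LinearMap.comp_smul]
  left_inv f := Subtype.ext <| by
    simp only [tensorId_comp]
    rw [LinearMap.comp_assoc, tensorId_comp_cup, ← LinearMap.comp_assoc,
      tensorId_cap_comp_cup ht, LinearMap.id_comp]
  right_inv g := Subtype.ext <| by
    simp only [tensorId_comp]
    rw [← LinearMap.comp_assoc, cap_comp_tensorId, LinearMap.comp_assoc,
      cap_comp_tensorId_cup ht, LinearMap.comp_id]

theorem exists_mul_lastE_eq (ht : t ≠ 0) {f : Module.End ℂ (Vn (m + 2))}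
    (hf : f ∈ intertwiners t (m + 2) (m + 2)) :
    ∃ g ∈ intertwiners t (m + 1) (m + 1), f * lastE t m = tensorIdAlgHom g * lastE t m := by
  let h : intertwiners t m (m + 2) :=
    ⟨f ∘ₗ cup t m, comp_mem_intertwiners hf (cup_mem_intertwiners ht)⟩
  refine ⟨rotate ht m (m + 1) h, (rotate ht m (m + 1) h).2, ?_⟩
  have hcup : f ∘ₗ cup t m = tensorId (rotate ht m (m + 1) h).1 ∘ₗ cup t m :=
    congr_arg Subtype.val ((rotate ht m (m + 1)).symm_apply_apply h).symm
  calc (f ∘ₗ cup t m) ∘ₗ cap t m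
      = tensorId (rotate ht m (m + 1) h).1 ∘ₗ cup t m ∘ₗ cap t m := by
        rw [hcup, LinearMap.comp_assoc]

theorem finrank_intertwiners_eq (ht : t ≠ 0) (m k : ℕ) :
    Module.finrank ℂ (intertwiners t m k) = Module.finrank ℂ (intertwiners t 0 (k + m)) := by
  induction m generalizing k with
  | zero => rfl
  | succ m ih => rw [← (rotate ht m k).finrank_eq, ih, add_right_comm, add_assoc]

theorem lastE_mem_intertwiners (ht : t ≠ 0) : lastE t m ∈ intertwiners t (m + 2) (m + 2) :=
  comp_mem_intertwiners (cup_mem_intertwiners ht) (cap_mem_intertwiners ht)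

theorem toSubmodule_centralizer_act (n : ℕ) :
    (Subalgebra.centralizer ℂ (Set.range (act t n))).toSubmodule = intertwiners t n n := by
  ext f
  simp only [Subalgebra.mem_toSubmodule, Subalgebra.mem_centralizer_iff, Set.forall_mem_range]
  rfl

theorem centralizer_range_eq {n : ℕ} {π : At t →ₐ[ℂ] Module.End ℂ (Vn n)} (hπ : IsPi t n π) :
    Subalgebra.centralizer ℂ (Set.range π) = Subalgebra.centralizer ℂ (Set.range (act t n)) := by
  have hgen (x : QGen) : π (RingQuot.mkAlgHom ℂ (QRel t) (FreeAlgebra.ι ℂ x)) = act t n x := by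
    obtain ⟨hX, hY, hK, hK'⟩ := hπ
    cases x
    exacts [hX, hY, hK, hK']
  refine le_antisymm (Subalgebra.centralizer_le _ _ _ ?_) fun f hf ↦ ?_
  · rintro _ ⟨x, rfl⟩
    exact ⟨_, hgen x⟩
  · rw [Subalgebra.mem_centralizer_iff] at hf ⊢
    rintro _ ⟨a, rfl⟩
    obtain ⟨a, rfl⟩ := RingQuot.mkAlgHom_surjective ℂ (QRel t) a
    induction a with
    | grade0 c => simp only [AlgHom.commutes, Algebra.commutes]
    | grade1 x => exact hgen x ▸ hf _ ⟨x, rfl⟩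
    | mul a b ha hb => simp only [map_mul]; exact (Commute.mul_left ha hb)
    | add a b ha hb => simp only [map_add]; exact (Commute.add_left ha hb)

end Intertwiners

/-! ### Clebsch–Gordan recursion and the dimension of the commutant -/

section Dimension

variable {t : ℂ} {n : ℕ} {l : ℤ}

/-- The highest weight vectors of weight `t ^ l` in `1̲^{⊗n}`. -/
abbrev tensorHighestWeight (t : ℂ) (n : ℕ) (l : ℤ) : Submodule ℂ (Vn n) :=
  highestWeightSpace t (piX t n) (piK t n) l

/-- The coefficient for which `v ⊗ e₁ - c • Y v ⊗ e₀` is a highest weight vector of weight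
`t ^ l` whenever `v` is one of weight `t ^ (l + 1)`. -/
def clebschGordanCoeff (t : ℂ) (l : ℤ) : ℂ := t ^ (-(l + 2)) / qint t (l + 1)

theorem mem_tensorHighestWeight_succ_iff_slice (ht : t ≠ 0) {F : Vn (n + 1)} :
    F ∈ tensorHighestWeight t (n + 1) l ↔
      (t • piX t n (slice 0 F) + piK' t n (slice 1 F) = 0 ∧
        piK t n (slice 0 F) = t ^ (l - 1) • slice 0 F) ∧
      slice 1 F ∈ tensorHighestWeight t n (l + 1) := by
  have hext (G H : Vn (n + 1)) : G = H ↔ slice 0 G = slice 0 H ∧ slice 1 G = slice 1 H :=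
    ⟨fun h ↦ h ▸ ⟨rfl, rfl⟩, fun h ↦ ext_slice_two h.1 h.2⟩
  have hsub : t ^ (l - 1) = t⁻¹ * t ^ l := by rw [zpow_sub_one₀ ht, mul_comm]
  have hadd : t ^ (l + 1) = t * t ^ l := by rw [zpow_add_one₀ ht, mul_comm]
  simp only [mem_highestWeightSpace, hext, slice_zero_piX, slice_one_piX, slice_zero_piK,
    slice_one_piK, map_zero, map_smul, hsub, hadd, mul_smul, eq_inv_smul_iff₀ ht,
    inv_smul_eq_iff₀ ht, smul_zero]
  tauto

theorem mem_tensorHighestWeight_succ (hinj : Function.Injective fun k : ℤ ↦ t ^ k)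
    (hl : l ≠ -1) {F : Vn (n + 1)} :
    F ∈ tensorHighestWeight t (n + 1) l ↔
      slice 0 F + clebschGordanCoeff t l • piY t n (slice 1 F) ∈ tensorHighestWeight t n (l - 1) ∧
        slice 1 F ∈ tensorHighestWeight t n (l + 1) := by
  have ht := ne_zero_of_zpow_injective hinj
  have htriple := isQuantumSl2Triple_pi hinj n
  rw [mem_tensorHighestWeight_succ_iff_slice ht, and_congr_left_iff]
  intro hB
  obtain ⟨hX, hK⟩ := mem_highestWeightSpace.1 hB
  have hc : t * (clebschGordanCoeff t l * qint t (l + 1)) = t ^ (-(l + 1)) := by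
    rw [clebschGordanCoeff, div_mul_cancel₀ _ (qint_ne_zero hinj (by lia)), ← zpow_one_add₀ ht]
    congr 1
    ring
  have hX' : piX t n (slice 0 F + clebschGordanCoeff t l • piY t n (slice 1 F)) =
      t⁻¹ • (t • piX t n (slice 0 F) + piK' t n (slice 1 F)) := by
    rw [htriple.inv_apply ht hK, ← hc, map_add, map_smul, htriple.X_apply_Y ht hK, hX, map_zero,
      zero_add, mul_smul, ← smul_add, inv_smul_smul₀ ht, mul_smul]
  have hKY := htriple.K_apply_Y ht hK
  rw [show l + 1 - 2 = l - 1 by ring] at hKY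
  rw [mem_highestWeightSpace, hX', smul_eq_zero_iff_right (inv_ne_zero ht), map_add, map_smul, hKY,
    smul_add, smul_comm (clebschGordanCoeff t l), add_left_inj]

/-- `1̲^{⊗n} ⊗ 1̲` contains one highest weight vector of weight `t ^ l` for each one of weight
`t ^ (l - 1)` or `t ^ (l + 1)` in `1̲^{⊗n}`. -/
def tensorHighestWeightSuccEquiv (hinj : Function.Injective fun k : ℤ ↦ t ^ k) (n : ℕ)
    (hl : l ≠ -1) : tensorHighestWeight t (n + 1) l ≃ₗ[ℂ]
      tensorHighestWeight t n (l - 1) × tensorHighestWeight t n (l + 1) where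
  toFun F := (⟨_, ((mem_tensorHighestWeight_succ hinj hl).1 F.2).1⟩,
    ⟨_, ((mem_tensorHighestWeight_succ hinj hl).1 F.2).2⟩)
  invFun p := ⟨glue ![p.1 - clebschGordanCoeff t l • piY t n p.2, p.2],
    (mem_tensorHighestWeight_succ hinj hl).2 (by simp)⟩
  map_add' F G := Prod.ext (Subtype.ext <| by
    simp only [Submodule.coe_add, Prod.mk_add_mk, map_add, smul_add]
    exact add_add_add_comm _ _ _ _) (Subtype.ext <| map_add _ _ _)
  map_smul' c F := Prod.ext (Subtype.ext <| by
    simp only [SetLike.val_smul, RingHom.id_apply, Prod.smul_mk, map_smul, smul_add]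
    rw [smul_comm c]) (Subtype.ext <| map_smul _ _ _)
  left_inv F := Subtype.ext (ext_slice_two (by simp) (by simp))
  right_inv p := by simp

theorem finrank_tensorHighestWeight_succ (hinj : Function.Injective fun k : ℤ ↦ t ^ k) (n : ℕ)
    (hl : l ≠ -1) : Module.finrank ℂ (tensorHighestWeight t (n + 1) l) =
      Module.finrank ℂ (tensorHighestWeight t n (l - 1)) +
        Module.finrank ℂ (tensorHighestWeight t n (l + 1)) := by
  rw [(tensorHighestWeightSuccEquiv hinj n hl).finrank_eq, Module.finrank_prod]

/-- The number of lattice paths on `ℕ` with `n` steps `±1` from `0` to `l`. -/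
def ballot : ℕ → ℕ → ℕ
  | 0, 0 => 1
  | 0, _ + 1 => 0
  | n + 1, 0 => ballot n 1
  | n + 1, l + 1 => ballot n l + ballot n (l + 2)

theorem ballot_eq_zero_of_lt {n l : ℕ} (h : n < l) : ballot n l = 0 := by
  induction n generalizing l with
  | zero => obtain _ | l := l <;> simp_all [ballot]
  | succ n ih =>
    obtain _ | l := l
    · simp at h
    · rw [ballot, ih (by lia), ih (by lia)]

theorem ballot_add_choose (l j : ℕ) :
    ballot (l + 2 * j) l + (l + 2 * j + 1).choose j = 2 * (l + 2 * j).choose j := by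
  induction hn : l + 2 * j generalizing l j with
  | zero => obtain ⟨rfl, rfl⟩ : l = 0 ∧ j = 0 := by lia
            simp [ballot]
  | succ n ih =>
    obtain _ | l := l <;> obtain _ | j := j
    · lia
    · have hstep := ih 1 j (by lia)
      have hhalf : n.choose (j + 1) = n.choose j := by
        obtain rfl : n = 2 * j + 1 := by lia
        exact Nat.choose_symm_half j
      simp only [ballot, Nat.choose_succ_succ'] at hstep ⊢
      lia
    · have hstep := ih l 0 (by lia)
      simp only [ballot, Nat.choose_zero_right, ballot_eq_zero_of_lt (show n < l + 2 by lia)]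
        at hstep ⊢
      lia
    · have hstep := ih l (j + 1) (by lia)
      have hstep' := ih (l + 2) j (by lia)
      simp only [ballot, Nat.choose_succ_succ'] at hstep hstep' ⊢
      lia

theorem ballot_self (n : ℕ) : ballot n n = 1 := by
  have := ballot_add_choose n 0
  simp only [mul_zero, add_zero, Nat.choose_zero_right] at this
  lia

theorem ballot_two_mul_zero (n : ℕ) : ballot (2 * n) 0 = catalan n := by
  have hballot := ballot_add_choose 0 n
  have hchoose := Nat.add_one_mul_choose_eq (2 * n) n
  rw [Nat.choose_symm_half] at hchoose
  refine Nat.eq_of_mul_eq_mul_left n.add_one_pos ?_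
  rw [succ_mul_catalan_eq_centralBinom, Nat.centralBinom_eq_two_mul_choose]
  rw [zero_add] at hballot
  linear_combination (n + 1) * hballot + hchoose

theorem finrank_tensorHighestWeight (hinj : Function.Injective fun k : ℤ ↦ t ^ k) (n l : ℕ) :
    Module.finrank ℂ (tensorHighestWeight t n l) = ballot n l := by
  induction n generalizing l with
  | zero =>
    obtain _ | l := l
    · have htop : tensorHighestWeight t 0 (0 : ℕ) = ⊤ :=
        Submodule.eq_top_iff'.2 fun v ↦ by simp [mem_highestWeightSpace]
      rw [htop, finrank_top, Module.finrank_fintype_fun_eq_card]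
      rfl
    · have hne : t ^ ((l + 1 : ℕ) : ℤ) ≠ 1 := fun h ↦ by
        have := hinj (h.trans (zpow_zero t).symm)
        lia
      have hbot : tensorHighestWeight t 0 (l + 1 : ℕ) = ⊥ :=
        (Submodule.eq_bot_iff _).2 fun v hv ↦ by
          have hK := (mem_highestWeightSpace.1 hv).2
          rw [piK_zero, Module.End.one_apply, ← sub_eq_zero] at hK
          nth_rw 1 [← one_smul ℂ v, ← sub_smul, smul_eq_zero] at hK
          exact hK.resolve_left (sub_ne_zero.2 hne.symm)
      rw [hbot, finrank_bot, ballot]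
  | succ n ih =>
    rw [finrank_tensorHighestWeight_succ hinj n (by lia)]
    obtain _ | l := l
    · have hbot : tensorHighestWeight t n ((0 : ℕ) - 1) = ⊥ :=
        (isQuantumSl2Triple_pi hinj n).highestWeightSpace_eq_bot hinj (by simp)
      rw [hbot, finrank_bot, zero_add, show ((0 : ℕ) : ℤ) + 1 = (1 : ℕ) by simp, ih, ballot]
    · rw [show ((l + 1 : ℕ) : ℤ) - 1 = l by simp,
        show ((l + 1 : ℕ) : ℤ) + 1 = (l + 2 : ℕ) by push_cast; ring, ih, ih, ballot]

/-- An intertwiner out of the trivial module is determined by the image of `1`. -/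
def intertwinersZeroEquiv (hinj : Function.Injective fun k : ℤ ↦ t ^ k) (n : ℕ) :
    intertwiners t 0 n ≃ₗ[ℂ] tensorHighestWeight t n 0 where
  toFun f := ⟨f.1 1, by
    obtain ⟨hX, -, hK, -⟩ := mem_intertwiners.1 f.2
    exact mem_highestWeightSpace.2 (by simp [hX, hK])⟩
  invFun v := ⟨LinearMap.toSpanSingleton ℂ _ v.1 ∘ₗ LinearMap.proj default, by
    have htriple := isQuantumSl2Triple_pi hinj n
    obtain ⟨hX, hK⟩ := mem_highestWeightSpace.1 v.2
    have hK' := htriple.inv_apply (ne_zero_of_zpow_injective hinj) hK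
    rw [neg_zero, zpow_zero, one_smul] at hK'
    exact mem_intertwiners.2 (by simp [hX, hK, hK', htriple.Y_apply_eq_zero hinj v.2])⟩
  map_add' _ _ := rfl
  map_smul' _ _ := rfl
  left_inv f := Subtype.ext <| LinearMap.ext fun F ↦ by
    have hF : F = F default • 1 := funext fun u ↦ by simp [Subsingleton.elim u default]
    conv_rhs => rw [hF, map_smul]
    rfl
  right_inv v := Subtype.ext (one_smul ℂ v.1)

theorem finrank_intertwiners (hinj : Function.Injective fun k : ℤ ↦ t ^ k) (n : ℕ) :
    Module.finrank ℂ (intertwiners t n n) = catalan n := by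
  rw [finrank_intertwiners_eq (ne_zero_of_zpow_injective hinj), ← two_mul,
    (intertwinersZeroEquiv hinj _).finrank_eq]
  exact (finrank_tensorHighestWeight hinj _ 0).trans (ballot_two_mul_zero n)

end Dimension

/-! ### The joint kernel of the generators -/

section JointKernel

variable {t : ℂ} {n : ℕ}

/-- The Temperley–Lieb generators `E_1, …, E_{n-1}`. -/
def generators (t : ℂ) (n : ℕ) : Set (Module.End ℂ (Vn n)) :=
  {f | ∃ (i : ℕ) (h : i + 1 < n), f = TLE t n i h}

theorem generators_zero (t : ℂ) : generators t 0 = ∅ :=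
  Set.eq_empty_of_forall_notMem fun _ ⟨_, h, _⟩ ↦ absurd h (by lia)

theorem generators_one (t : ℂ) : generators t 1 = ∅ :=
  Set.eq_empty_of_forall_notMem fun _ ⟨_, h, _⟩ ↦ absurd h (by lia)

theorem generators_add_two (t : ℂ) (m : ℕ) :
    generators t (m + 2) = insert (lastE t m) (tensorIdAlgHom '' generators t (m + 1)) := by
  ext f
  constructor
  · rintro ⟨i, h, rfl⟩
    obtain rfl | hi := (show i ≤ m by lia).eq_or_lt
    · exact Or.inl (TLE_last h)
    · exact Or.inr ⟨_, ⟨i, by lia, rfl⟩, (TLE_succ (by lia) h).symm⟩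
  · rintro (rfl | ⟨_, ⟨i, h, rfl⟩, rfl⟩)
    · exact ⟨m, by lia, (TLE_last _).symm⟩
    · exact ⟨i, by lia, (TLE_succ h _).symm⟩

theorem image_generators_subset (t : ℂ) (n : ℕ) :
    tensorIdAlgHom '' generators t n ⊆ generators t (n + 1) := by
  obtain _ | m := n
  · simp [generators_zero]
  · exact generators_add_two t m ▸ Set.subset_insert _ _

theorem generators_subset_intertwiners (ht : t ≠ 0) (n : ℕ) :
    generators t n ⊆ intertwiners t n n := by
  induction n with
  | zero => simp [generators_zero]
  | succ n ih =>
    obtain _ | m := n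
    · simp [generators_one]
    · rw [generators_add_two]
      rintro _ (rfl | ⟨E, hE, rfl⟩)
      · exact lastE_mem_intertwiners ht
      · exact tensorId_mem_intertwiners (ih hE)

/-- The vector `e₀ ⊗ ⋯ ⊗ e₀`, of highest weight `t ^ n`. -/
def topVector (n : ℕ) : Vn n := Pi.single 0 1

theorem topVector_ne_zero (n : ℕ) : topVector n ≠ 0 := by simp [topVector]

@[simp]
theorem slice_zero_topVector (n : ℕ) : slice 0 (topVector (n + 1)) = topVector n := by
  ext u
  simp [slice_apply, topVector, Pi.single_apply, funext_iff, Fin.forall_fin_succ']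

@[simp]
theorem slice_one_topVector (n : ℕ) : slice 1 (topVector (n + 1)) = 0 := by
  ext u
  simp [slice_apply, topVector, funext_iff, Fin.forall_fin_succ']

theorem topVector_mem_tensorHighestWeight (ht : t ≠ 0) (n : ℕ) :
    topVector n ∈ tensorHighestWeight t n n := by
  rw [mem_highestWeightSpace]
  induction n with
  | zero => simp
  | succ n ih =>
    constructor <;> apply ext_slice_two <;>
      simp [ih.1, ih.2, smul_smul, zpow_add_one₀ ht, mul_comm]

/-- The tensors annihilated by all the Temperley–Lieb generators. -/
def jointKernel (t : ℂ) (n : ℕ) : Submodule ℂ (Vn n) :=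
  ⨅ E ∈ generators t n, LinearMap.ker E

theorem mem_jointKernel {F : Vn n} : F ∈ jointKernel t n ↔ ∀ E ∈ generators t n, E F = 0 := by
  simp [jointKernel]

theorem slice_mem_jointKernel {F : Vn (n + 1)} (hF : F ∈ jointKernel t (n + 1)) (a : Fin 2) :
    slice a F ∈ jointKernel t n := by
  rw [mem_jointKernel] at hF ⊢
  intro E hE
  have h := hF _ (image_generators_subset t n ⟨E, hE, rfl⟩)
  rw [tensorIdAlgHom_apply] at h
  rw [← slice_tensorId, h, map_zero]

theorem cap_eq_zero_of_mem_jointKernel (ht : t ≠ 0) {F : Vn (n + 2)}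
    (hF : F ∈ jointKernel t (n + 2)) : cap t n F = 0 := by
  have hE : cup t n (cap t n F) = 0 :=
    mem_jointKernel.1 hF (lastE t n) (generators_add_two t n ▸ Set.mem_insert _ _)
  have h := slice_slice_cup (t := t) 0 1 (cap t n F)
  rw [hE, map_zero, map_zero, eq_comm, smul_eq_zero] at h
  exact h.resolve_left (mul_ne_zero I_ne_zero ht)

theorem topVector_mem_jointKernel (t : ℂ) (n : ℕ) : topVector n ∈ jointKernel t n := by
  rw [mem_jointKernel]
  induction n with
  | zero => simp [generators_zero]
  | succ n ih =>
    obtain _ | m := n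
    · simp [generators_one]
    · rw [generators_add_two]
      rintro _ (rfl | ⟨E, hE, rfl⟩)
      · simp [lastE, cap_apply]
      · exact ext_slice_two (by simp [tensorIdAlgHom_apply, ih E hE])
          (by simp [tensorIdAlgHom_apply])

theorem slice_zero_apply_zero (F : Vn (n + 1)) : slice 0 F 0 = F 0 :=
  congr_arg F (Fin.snoc_init_self 0)

theorem eq_zero_of_mem_jointKernel (ht : t ≠ 0) {F : Vn (n + 1)}
    (hF : F ∈ jointKernel t (n + 1)) (hslice : slice 1 F = 0) (h0 : F 0 = 0) : F = 0 := by
  induction n with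
  | zero =>
    refine ext_slice_two (funext fun u ↦ ?_) (by rw [hslice, map_zero])
    rw [Subsingleton.elim u 0, slice_zero_apply_zero, h0, map_zero, Pi.zero_apply]
  | succ n ih =>
    have hcap := cap_eq_zero_of_mem_jointKernel ht hF
    rw [cap_apply, hslice, map_zero, smul_zero, zero_sub, neg_eq_zero, smul_eq_zero] at hcap
    refine ext_slice_two ?_ (by rw [hslice, map_zero])
    rw [map_zero]
    refine ih (slice_mem_jointKernel hF 0) (hcap.resolve_left ?_) ?_
    · exact mul_ne_zero I_ne_zero (inv_ne_zero ht)
    · rw [slice_zero_apply_zero, h0]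

theorem finrank_jointKernel_le (ht : t ≠ 0) (n : ℕ) :
    Module.finrank ℂ (jointKernel t n) ≤ n + 1 := by
  induction n with
  | zero => simpa using (jointKernel t 0).finrank_le
  | succ n ih =>
    let φ : jointKernel t (n + 1) →ₗ[ℂ] jointKernel t n × ℂ :=
      (((slice 1).restrict fun F hF ↦ slice_mem_jointKernel hF 1).prod
        (LinearMap.proj 0 ∘ₗ (jointKernel t (n + 1)).subtype))
    have hφ : Function.Injective φ := by
      refine (injective_iff_map_eq_zero φ).2 fun F hF ↦ Subtype.ext ?_
      obtain ⟨hslice, h0⟩ := Prod.mk.inj hF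
      exact eq_zero_of_mem_jointKernel ht F.2 (congr_arg Subtype.val hslice) h0
    calc Module.finrank ℂ (jointKernel t (n + 1))
        ≤ Module.finrank ℂ (jointKernel t n × ℂ) := φ.finrank_le_finrank_of_injective hφ
      _ = Module.finrank ℂ (jointKernel t n) + 1 := by
          rw [Module.finrank_prod, Module.finrank_self]
      _ ≤ n + 1 + 1 := by gcongr

theorem Y_pow_apply_mem_jointKernel (ht : t ≠ 0) {F : Vn n} (hF : F ∈ jointKernel t n) (k : ℕ) :
    (piY t n ^ k) F ∈ jointKernel t n := by
  induction k with
  | zero => exact hF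
  | succ k ih =>
    rw [mem_jointKernel] at ih ⊢
    intro E hE
    have hEY := (mem_intertwiners.1 (generators_subset_intertwiners ht n hE)).2.1
    rw [pow_succ', Module.End.mul_apply, ← hEY, ih E hE, map_zero]

theorem span_Y_pow_topVector (hinj : Function.Injective fun k : ℤ ↦ t ^ k) (n : ℕ) :
    Submodule.span ℂ (Set.range fun k : Fin (n + 1) ↦ (piY t n ^ (k : ℕ)) (topVector n)) =
      jointKernel t n := by
  have ht := ne_zero_of_zpow_injective hinj
  have htriple := isQuantumSl2Triple_pi hinj n
  have htop := topVector_mem_tensorHighestWeight ht n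
  have hli : LinearIndependent ℂ fun k : Fin (n + 1) ↦ (piY t n ^ (k : ℕ)) (topVector n) :=
    htriple.linearIndependent_Y_pow hinj (mem_highestWeightSpace.1 htop).2 Fin.val_injective
      fun k ↦ htriple.Y_pow_apply_ne_zero hinj htop (topVector_ne_zero n) fun j _ ↦ by lia
  refine Submodule.eq_of_le_of_finrank_le (Submodule.span_le.2 ?_) ?_
  · rintro _ ⟨k, rfl⟩
    exact Y_pow_apply_mem_jointKernel ht (topVector_mem_jointKernel t n) k
  · rw [finrank_span_eq_card hli, Fintype.card_fin]
    exact finrank_jointKernel_le ht n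

theorem exists_smul_eq_on_jointKernel (hinj : Function.Injective fun k : ℤ ↦ t ^ k)
    {f : Module.End ℂ (Vn n)} (hf : f ∈ intertwiners t n n) :
    ∃ c : ℂ, ∀ F ∈ jointKernel t n, f F = c • F := by
  obtain ⟨hX, hY, hK, -⟩ := mem_intertwiners.1 hf
  have htop := topVector_mem_tensorHighestWeight (ne_zero_of_zpow_injective hinj) n
  have hdim := (finrank_tensorHighestWeight hinj n n).trans (ballot_self n)
  have hftop : f (topVector n) ∈ tensorHighestWeight t n n := by
    rw [mem_highestWeightSpace] at htop ⊢
    rw [hX, hK, htop.1, htop.2, map_zero, map_smul]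
    exact ⟨rfl, rfl⟩
  obtain ⟨c, hc⟩ := (finrank_eq_one_iff_of_nonzero' ⟨_, htop⟩
    (by simpa [Subtype.ext_iff] using topVector_ne_zero n)).1 hdim ⟨_, hftop⟩
  replace hc : c • topVector n = f (topVector n) := congr_arg Subtype.val hc
  refine ⟨c, fun F hF ↦ ?_⟩
  rw [← span_Y_pow_topVector hinj] at hF
  refine LinearMap.eqOn_span (g := c • LinearMap.id) ?_ hF
  rintro _ ⟨k, rfl⟩
  have hYk : Commute f (piY t n ^ (k : ℕ)) :=
    Commute.pow_right (LinearMap.ext fun F ↦ (hY F).symm) _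
  have h := LinearMap.congr_fun hYk (topVector n)
  rw [Module.End.mul_apply, Module.End.mul_apply, ← hc, map_smul] at h
  exact h

end JointKernel

/-! ### Jones–Wenzl projections -/

section Wenzl

variable {𝕜 R : Type*} [Field 𝕜] [Ring R] [Algebra 𝕜 R] {A B E : R} {β : 𝕜}

/-- One step of Wenzl's recursion, which corrects the idempotent `A` by a multiple of `A E A` to one
that `E` annihilates. -/
def wenzlStep (β : 𝕜) (A E : R) : R := A - β⁻¹ • (A * E * A)

theorem mul_wenzlStep (hA : IsIdempotentElem A) : A * wenzlStep β A E = wenzlStep β A E := by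
  rw [wenzlStep, mul_sub, mul_smul_comm, ← mul_assoc, ← mul_assoc, hA.eq]

theorem mul_wenzlStep_eq_zero (hβ : β ≠ 0) (hEB : Commute E B) (hBA : B * A = A)
    (hE : E * A * E = β • (B * E)) : E * wenzlStep β A E = 0 := by
  calc E * (A - β⁻¹ • (A * E * A)) = E * A - β⁻¹ • (E * A * E * A) := by
        rw [mul_sub, mul_smul_comm, ← mul_assoc, ← mul_assoc]
    _ = 0 := by
        rw [hE, smul_mul_assoc, inv_smul_smul₀ hβ, ← hEB.eq, mul_assoc, hBA, sub_self]

theorem isIdempotentElem_wenzlStep (hβ : β ≠ 0) (hA : IsIdempotentElem A) (hEB : Commute E B)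
    (hBA : B * A = A) (hE : E * A * E = β • (B * E)) : IsIdempotentElem (wenzlStep β A E) := by
  calc wenzlStep β A E * wenzlStep β A E
      = A * wenzlStep β A E - β⁻¹ • (A * (E * (A * wenzlStep β A E))) := by
        nth_rw 1 [wenzlStep]
        simp only [sub_mul, smul_mul_assoc, mul_assoc]
    _ = wenzlStep β A E := by
        rw [mul_wenzlStep hA, mul_wenzlStep_eq_zero hβ hEB hBA hE, mul_zero, smul_zero, sub_zero]

theorem mul_wenzlStep_mul {E' : R} {δ : 𝕜} (hB : IsIdempotentElem B) (hBE : Commute B E)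
    (hEE : E * E = δ • E) (hEE'E : E * E' * E = E) :
    E * wenzlStep β B E' * E = (δ - β⁻¹) • (B * E) := by
  have hEBE : E * B * E = δ • (B * E) := by rw [← hBE.eq, mul_assoc, hEE, mul_smul_comm]
  have hEBE'BE : E * (B * E' * B) * E = B * E :=
    calc E * (B * E' * B) * E = E * B * E' * (B * E) := by simp only [mul_assoc]
      _ = B * E * E' * (E * B) := by rw [hBE.eq]
      _ = B * (E * E' * E) * B := by simp only [mul_assoc]
      _ = B * E := by rw [hEE'E, mul_assoc, ← hBE.eq, ← mul_assoc, hB.eq]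
  rw [wenzlStep, mul_sub, sub_mul, mul_smul_comm, smul_mul_assoc, hEBE, hEBE'BE, ← sub_smul]

end Wenzl

section JonesWenzl

variable {t : ℂ} {m n : ℕ}

/-- The ratio between the partial trace of the `m+1`-st Jones–Wenzl projection over its last
factor and the `m`-th one. -/
def wenzlCoeff (t : ℂ) (m : ℕ) : ℂ := -(qint t (m + 2) / qint t (m + 1))

theorem wenzlCoeff_ne_zero (hinj : Function.Injective fun k : ℤ ↦ t ^ k) (m : ℕ) :
    wenzlCoeff t m ≠ 0 :=
  neg_ne_zero.2 (div_ne_zero (qint_ne_zero hinj (by lia)) (qint_ne_zero hinj (by lia)))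

theorem wenzlCoeff_zero (hinj : Function.Injective fun k : ℤ ↦ t ^ k) :
    wenzlCoeff t 0 = -(t ^ 2 + t⁻¹ ^ 2) := by
  have h := qint_add_two hinj 0
  rw [zero_add, zero_add, qint_one hinj, qint_zero] at h
  rw [wenzlCoeff, Nat.cast_zero, zero_add, zero_add, h, qint_one hinj, mul_one, sub_zero, div_one]

theorem wenzlCoeff_succ (hinj : Function.Injective fun k : ℤ ↦ t ^ k) (m : ℕ) :
    wenzlCoeff t (m + 1) = -(t ^ 2 + t⁻¹ ^ 2) - (wenzlCoeff t m)⁻¹ := by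
  have : qint t (m + 1) ≠ 0 := qint_ne_zero hinj (by lia)
  have : qint t (m + 2) ≠ 0 := qint_ne_zero hinj (by lia)
  have h := qint_add_two hinj (m + 1)
  rw [add_assoc (m : ℤ) 1 1, one_add_one_eq_two] at h
  rw [wenzlCoeff, wenzlCoeff, Nat.cast_succ, add_assoc (m : ℤ) 1 1, one_add_one_eq_two, h]
  field_simp
  ring

/-- The Jones–Wenzl projections, defined by Wenzl's recursion. -/
def jonesWenzl (t : ℂ) : (n : ℕ) → Module.End ℂ (Vn n)
  | 0 => 1
  | 1 => 1
  | m + 2 => wenzlStep (wenzlCoeff t m) (tensorIdAlgHom (jonesWenzl t (m + 1))) (lastE t m)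

theorem lastE_mul_jonesWenzl_mul_lastE_succ (hinj : Function.Injective fun k : ℤ ↦ t ^ k)
    (hidem : IsIdempotentElem (jonesWenzl t (m + 1))) :
    lastE t (m + 1) * tensorIdAlgHom (jonesWenzl t (m + 2)) * lastE t (m + 1) =
      wenzlCoeff t (m + 1) • (tensorIdAlgHom (tensorIdAlgHom (jonesWenzl t (m + 1))) *
        lastE t (m + 1)) := by
  rw [jonesWenzl, wenzlStep, map_sub, map_smul, map_mul, map_mul, wenzlCoeff_succ hinj]
  exact mul_wenzlStep_mul ((hidem.map _).map _) (commute_tensorId_lastE _) lastE_mul_lastE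
    (lastE_mul_tensorId_lastE_mul_lastE (ne_zero_of_zpow_injective hinj))

theorem jonesWenzl_spec (hinj : Function.Injective fun k : ℤ ↦ t ^ k) (m : ℕ) :
    IsIdempotentElem (jonesWenzl t (m + 1)) ∧
      tensorIdAlgHom (jonesWenzl t m) * jonesWenzl t (m + 1) = jonesWenzl t (m + 1) ∧
      lastE t m * tensorIdAlgHom (jonesWenzl t (m + 1)) * lastE t m =
        wenzlCoeff t m • (tensorIdAlgHom (tensorIdAlgHom (jonesWenzl t m)) * lastE t m) := by
  induction m with
  | zero =>
    refine ⟨.one, ?_, ?_⟩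
    · rw [jonesWenzl, jonesWenzl, map_one, one_mul]
    · rw [jonesWenzl, jonesWenzl, map_one, map_one, map_one, mul_one, one_mul, lastE_mul_lastE,
        wenzlCoeff_zero hinj]
  | succ m ih =>
    obtain ⟨hidem, habsorb, htrace⟩ := ih
    refine ⟨?_, mul_wenzlStep (hidem.map _), lastE_mul_jonesWenzl_mul_lastE_succ hinj hidem⟩
    exact isIdempotentElem_wenzlStep (wenzlCoeff_ne_zero hinj m) (hidem.map _)
      (commute_tensorId_lastE _).symm (by rw [← map_mul, habsorb]) htrace

theorem generator_mul_jonesWenzl (hinj : Function.Injective fun k : ℤ ↦ t ^ k)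
    {E : Module.End ℂ (Vn n)} (hE : E ∈ generators t n) : E * jonesWenzl t n = 0 := by
  induction n with
  | zero => simp [generators_zero] at hE
  | succ n ih =>
    obtain _ | m := n
    · simp [generators_one] at hE
    · obtain ⟨hidem, habsorb, htrace⟩ := jonesWenzl_spec hinj m
      rw [generators_add_two] at hE
      obtain rfl | ⟨E, hE, rfl⟩ := hE
      · exact mul_wenzlStep_eq_zero (wenzlCoeff_ne_zero hinj m) (commute_tensorId_lastE _).symm
          (by rw [← map_mul, habsorb]) htrace
      · rw [← (jonesWenzl_spec hinj (m + 1)).2.1, ← mul_assoc, ← map_mul, ih hE, map_zero,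
          zero_mul]

theorem exists_mul_jonesWenzl_eq_smul (hinj : Function.Injective fun k : ℤ ↦ t ^ k)
    {f : Module.End ℂ (Vn n)} (hf : f ∈ intertwiners t n n) :
    ∃ c : ℂ, f * jonesWenzl t n = c • jonesWenzl t n := by
  obtain ⟨c, hc⟩ := exists_smul_eq_on_jointKernel hinj hf
  exact ⟨c, LinearMap.ext fun F ↦ hc _ <| mem_jointKernel.2 fun E hE ↦
    LinearMap.congr_fun (generator_mul_jonesWenzl hinj hE) F⟩

end JonesWenzl

/-! ### The double commutant -/

section Commutant

variable {t : ℂ} {m n : ℕ}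

/-- The Temperley–Lieb algebra in its action on `1̲^{⊗n}`. -/
def temperleyLieb (t : ℂ) (n : ℕ) : Subalgebra ℂ (Module.End ℂ (Vn n)) :=
  Algebra.adjoin ℂ (generators t n)

theorem map_temperleyLieb_le (t : ℂ) (n : ℕ) :
    (temperleyLieb t n).map tensorIdAlgHom ≤ temperleyLieb t (n + 1) := by
  rw [temperleyLieb, AlgHom.map_adjoin]
  exact Algebra.adjoin_mono (image_generators_subset t n)

theorem tensorIdAlgHom_mem_temperleyLieb {f : Module.End ℂ (Vn n)} (hf : f ∈ temperleyLieb t n) :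
    tensorIdAlgHom f ∈ temperleyLieb t (n + 1) :=
  map_temperleyLieb_le t n ⟨f, hf, rfl⟩

theorem lastE_mem_temperleyLieb (t : ℂ) (m : ℕ) : lastE t m ∈ temperleyLieb t (m + 2) :=
  Algebra.subset_adjoin (generators_add_two t m ▸ Set.mem_insert _ _)

theorem jonesWenzl_mem_temperleyLieb (t : ℂ) (n : ℕ) : jonesWenzl t n ∈ temperleyLieb t n := by
  induction n with
  | zero => exact one_mem _
  | succ n ih =>
    obtain _ | m := n
    · exact one_mem _
    · have hA := tensorIdAlgHom_mem_temperleyLieb ih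
      exact sub_mem hA (Subalgebra.smul_mem _
        (mul_mem (mul_mem hA (lastE_mem_temperleyLieb t m)) hA) _)

theorem temperleyLieb_le_centralizer (ht : t ≠ 0) (n : ℕ) :
    temperleyLieb t n ≤ Subalgebra.centralizer ℂ (Set.range (act t n)) :=
  Algebra.adjoin_le <| (generators_subset_intertwiners ht n).trans
    (SetLike.coe_subset_coe.2 (toSubmodule_centralizer_act n).ge)

/-- The two-sided ideal of the Temperley–Lieb algebra generated by its last generator. -/
def lastEIdeal (t : ℂ) (m : ℕ) : Submodule ℂ (Module.End ℂ (Vn (m + 2))) :=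
  (temperleyLieb t (m + 2)).toSubmodule * Submodule.span ℂ {lastE t m} *
    (temperleyLieb t (m + 2)).toSubmodule

theorem mul_mul_mem_lastEIdeal {a b : Module.End ℂ (Vn (m + 2))}
    (ha : a ∈ temperleyLieb t (m + 2)) (hb : b ∈ temperleyLieb t (m + 2)) :
    a * lastE t m * b ∈ lastEIdeal t m :=
  Submodule.mul_mem_mul (Submodule.mul_mem_mul ha (Submodule.mem_span_singleton_self _)) hb

theorem lastEIdeal_le {N : Submodule ℂ (Module.End ℂ (Vn (m + 2)))}
    (h : ∀ a ∈ temperleyLieb t (m + 2), ∀ b ∈ temperleyLieb t (m + 2), a * lastE t m * b ∈ N) :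
    lastEIdeal t m ≤ N := by
  refine Submodule.mul_le.2 fun x hx b hb ↦ ?_
  refine (Submodule.mul_le (P := N.comap (LinearMap.mulRight ℂ b))).2 (fun a ha y hy ↦ ?_) hx
  obtain ⟨c, rfl⟩ := Submodule.mem_span_singleton.1 hy
  rw [mul_smul_comm]
  exact Submodule.smul_mem _ c (h a ha b hb)

theorem map_lastEIdeal_le (ht : t ≠ 0) (m : ℕ) :
    (lastEIdeal t m).map tensorIdAlgHom.toLinearMap ≤ lastEIdeal t (m + 1) := by
  refine Submodule.map_le_iff_le_comap.2 (lastEIdeal_le fun a ha b hb ↦ ?_)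
  have hE := tensorIdAlgHom_mem_temperleyLieb (lastE_mem_temperleyLieb t m)
  have h := mul_mul_mem_lastEIdeal (mul_mem (tensorIdAlgHom_mem_temperleyLieb ha) hE)
    (mul_mem hE (tensorIdAlgHom_mem_temperleyLieb hb))
  rw [Submodule.mem_comap, AlgHom.toLinearMap_apply, map_mul, map_mul,
    ← tensorId_lastE_mul_lastE_mul_tensorId_lastE ht]
  simpa only [mul_assoc] using h

theorem one_sub_jonesWenzl_mem_lastEIdeal (ht : t ≠ 0) (m : ℕ) :
    1 - jonesWenzl t (m + 2) ∈ lastEIdeal t m := by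
  have hstep (m : ℕ) (h : tensorIdAlgHom (1 - jonesWenzl t (m + 1)) ∈ lastEIdeal t m) :
      1 - jonesWenzl t (m + 2) ∈ lastEIdeal t m := by
    have hA := tensorIdAlgHom_mem_temperleyLieb (jonesWenzl_mem_temperleyLieb t (m + 1))
    rw [jonesWenzl, wenzlStep, sub_sub_eq_add_sub, add_sub_right_comm, ← map_one tensorIdAlgHom,
      ← map_sub]
    exact add_mem h (Submodule.smul_mem _ _ (mul_mul_mem_lastEIdeal hA hA))
  induction m with
  | zero => exact hstep 0 (by simp [jonesWenzl])
  | succ m ih => exact hstep (m + 1) (map_lastEIdeal_le ht m ⟨_, ih, rfl⟩)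

theorem mul_mem_temperleyLieb_of_mem_lastEIdeal (ht : t ≠ 0)
    (ih : intertwiners t (m + 1) (m + 1) ≤ (temperleyLieb t (m + 1)).toSubmodule)
    {f x : Module.End ℂ (Vn (m + 2))} (hf : f ∈ intertwiners t (m + 2) (m + 2))
    (hx : x ∈ lastEIdeal t m) : f * x ∈ temperleyLieb t (m + 2) := by
  suffices h : lastEIdeal t m ≤
      (temperleyLieb t (m + 2)).toSubmodule.comap (LinearMap.mulLeft ℂ f) from h hx
  refine lastEIdeal_le fun a ha b hb ↦ ?_
  have ha' : a ∈ intertwiners t (m + 2) (m + 2) :=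
    toSubmodule_centralizer_act (t := t) (m + 2) ▸ temperleyLieb_le_centralizer ht (m + 2) ha
  obtain ⟨g, hg, hfaE⟩ := exists_mul_lastE_eq ht (comp_mem_intertwiners hf ha')
  have hfaEb : f * (a * lastE t m * b) = tensorIdAlgHom g * lastE t m * b := by
    rw [← hfaE, ← mul_assoc, ← mul_assoc]
    rfl
  rw [Submodule.mem_comap, LinearMap.mulLeft_apply, hfaEb, Subalgebra.mem_toSubmodule]
  exact mul_mem (mul_mem (tensorIdAlgHom_mem_temperleyLieb (ih hg)) (lastE_mem_temperleyLieb t m))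
    hb

theorem mem_temperleyLieb_of_mul_one_sub_jonesWenzl_mem
    (hinj : Function.Injective fun k : ℤ ↦ t ^ k) {f : Module.End ℂ (Vn n)}
    (hf : f ∈ intertwiners t n n) (h : f * (1 - jonesWenzl t n) ∈ temperleyLieb t n) :
    f ∈ temperleyLieb t n := by
  obtain ⟨c, hc⟩ := exists_mul_jonesWenzl_eq_smul hinj hf
  have hsplit : f = f * (1 - jonesWenzl t n) + c • jonesWenzl t n := by
    rw [← hc, mul_sub, mul_one, sub_add_cancel]
  rw [hsplit]
  exact add_mem h (Subalgebra.smul_mem _ (jonesWenzl_mem_temperleyLieb t n) c)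

theorem intertwiners_le_temperleyLieb (hinj : Function.Injective fun k : ℤ ↦ t ^ k) (n : ℕ) :
    intertwiners t n n ≤ (temperleyLieb t n).toSubmodule := by
  have ht := ne_zero_of_zpow_injective hinj
  induction n with
  | zero =>
    exact fun f hf ↦ mem_temperleyLieb_of_mul_one_sub_jonesWenzl_mem hinj hf (by simp [jonesWenzl])
  | succ n ih =>
    refine fun f hf ↦ mem_temperleyLieb_of_mul_one_sub_jonesWenzl_mem hinj hf ?_
    obtain _ | m := n
    · simp [jonesWenzl]
    · exact mul_mem_temperleyLieb_of_mem_lastEIdeal ht ih hf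
        (one_sub_jonesWenzl_mem_lastEIdeal ht m)

theorem temperleyLieb_eq_centralizer (hinj : Function.Injective fun k : ℤ ↦ t ^ k) (n : ℕ) :
    temperleyLieb t n = Subalgebra.centralizer ℂ (Set.range (act t n)) :=
  le_antisymm (temperleyLieb_le_centralizer (ne_zero_of_zpow_injective hinj) n) fun _ hf ↦
    intertwiners_le_temperleyLieb hinj n (toSubmodule_centralizer_act (t := t) n ▸ hf)

theorem finrank_temperleyLieb (hinj : Function.Injective fun k : ℤ ↦ t ^ k) (n : ℕ) :
    Module.finrank ℂ (temperleyLieb t n) = catalan n := by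
  rw [temperleyLieb_eq_centralizer hinj, ← finrank_intertwiners hinj,
    ← toSubmodule_centralizer_act]
  rfl

end Commutant

end TemperleyLieb

/-- The unital subalgebra of `End((ℂ²)^{⊗n})` generated by
`E_1, …, E_{n−1}` is exactly `End_{Aₜ}((ℂ²)^{⊗n})`, the commutant of the `Aₜ`-action,
and it has dimension the Catalan number `C_n = (1/(n+1))·binom(2n,n)`. -/
theorem stmt10 (t : ℂ) (ht : t ≠ 0) (hroot : ∀ k : ℕ, 0 < k → t ^ k ≠ 1) (n : ℕ)
    (hn : 1 ≤ n) (π : At t →ₐ[ℂ] Module.End ℂ (Vn n)) (hπ : IsPi t n π) :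
    Algebra.adjoin ℂ {f : Module.End ℂ (Vn n) | ∃ (i : ℕ) (h : i + 1 < n), f = TLE t n i h}
        = Subalgebra.centralizer ℂ (Set.range ⇑π) ∧
      Module.finrank ℂ
        (Algebra.adjoin ℂ
          {f : Module.End ℂ (Vn n) | ∃ (i : ℕ) (h : i + 1 < n), f = TLE t n i h})
        = (2 * n).choose n / (n + 1) := by
  have hinj := TemperleyLieb.zpow_injective ht hroot
  rw [TemperleyLieb.centralizer_range_eq hπ, ← Nat.centralBinom_eq_two_mul_choose,
    ← catalan_eq_centralBinom_div]
  exact ⟨TemperleyLieb.temperleyLieb_eq_centralizer hinj n,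
    TemperleyLieb.finrank_temperleyLieb hinj n⟩

end
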